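/- arXiv:1305.4714 — 2 statements merged into one kernel-verified Lean document; each statement's English description precedes it below -/
import Mathlib

section
/- (Uniform momentum-derivative estimate for the rescaled flow) Assume Assumption C and fix T > 0. For λ ≥ 1, let (x^λ, ξ^λ) : ℝ → ℝ^d × ℝ^d solve the Hamilton equations for p^λ(x,ξ) = k(x,ξ) + λ^{−2}V(x) with initial data (x₀,ξ₀), ξ₀ ≠ 0. Suppose there exist λ₀ ≥ 1 and c, C, M > 0 such that |x^λ(t)| ≥ c|t| − C and |ξ^λ(t)| ≤ M for all |t| ≤ λT and λ ≥ λ₀. Then there exists C' > 0, independent of λ, such that |(ξ^λ)'(t)| ≤ C'⟨t⟩^{−1−μ} for all |t| ≤ λT and λ ≥ λ₀. -/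
open Filter MeasureTheory
open scoped Topology BigOperators

noncomputable section

abbrev E (d : ℕ) := EuclideanSpace ℝ (Fin d)

/-- Japanese bracket `⟨x⟩ = (1+|x|²)^{1/2}`. -/
def jap {d : ℕ} (x : E d) : ℝ := Real.sqrt (1 + ‖x‖ ^ 2)

/-- Japanese bracket of a real number. -/
def japr (t : ℝ) : ℝ := Real.sqrt (1 + t ^ 2)

/-- The kinetic energy symbol `k(x,ξ) = (1/2) Σ a_{mn}(x) ξ_m ξ_n`. -/
def kk {d : ℕ} (a : Fin d → Fin d → E d → ℝ) (x ξ : E d) : ℝ :=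
  (1 / 2) * ∑ m : Fin d, ∑ n : Fin d, a m n x * ξ m * ξ n

/-- `(y, η)` solves the Hamilton equations for the Hamiltonian `h`. -/
def IsHamiltonSol {d : ℕ} (h : E d → E d → ℝ) (y η : ℝ → E d) : Prop :=
  ∀ t : ℝ, HasDerivAt y (gradient (h (y t)) (η t)) t ∧
    HasDerivAt η (-gradient (fun x => h x (η t)) (y t)) t

/-- Assumption C (with long range exponent `μ` and short range exponent `ν`). -/
def AssumptionC {d : ℕ} (μ ν : ℝ) (a : Fin d → Fin d → E d → ℝ) (VL VS : E d → ℝ) : Prop :=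
  (∀ m n, ContDiff ℝ (⊤ : ℕ∞) (a m n)) ∧
  (∀ m n x, a m n x = a n m x) ∧
  (∀ (x ξ : E d), ξ ≠ 0 → 0 < ∑ m : Fin d, ∑ n : Fin d, a m n x * ξ m * ξ n) ∧
  (∀ m n (j : ℕ), ∃ C > 0, ∀ x : E d,
    ‖iteratedFDeriv ℝ j (fun z => a m n z - if m = n then (1 : ℝ) else 0) x‖
      ≤ C * jap x ^ (-μ - (j : ℝ))) ∧
  ContDiff ℝ (⊤ : ℕ∞) VL ∧ ContDiff ℝ (⊤ : ℕ∞) VS ∧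
  (∀ j : ℕ, ∃ C > 0, ∀ x : E d,
    ‖iteratedFDeriv ℝ j VL x‖ ≤ C * jap x ^ (2 - μ - (j : ℝ))) ∧
  (∀ j : ℕ, ∃ C > 0, ∀ x : E d,
    ‖iteratedFDeriv ℝ j VS x‖ ≤ C * jap x ^ (2 - ν - (j : ℝ)))

theorem aux_pow {p q K s : ℝ} (hp : 0 < p) (hq : 0 < q) (hK : 0 < K) (h : q ≤ K * p)
    (hs : s ≤ 0) : p ^ s ≤ K ^ (-s) * q ^ s := by
  have h1 : (K * p) ^ s ≤ q ^ s := Real.rpow_le_rpow_of_nonpos hq h hs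
  rw [Real.mul_rpow hK.le hp.le] at h1
  have h2 : 0 < K ^ (-s) := Real.rpow_pos_of_pos hK _
  have h3 : K ^ (-s) * K ^ s = 1 := by
    rw [← Real.rpow_add hK]; simp
  calc p ^ s = K ^ (-s) * (K ^ s * p ^ s) := by rw [← mul_assoc, h3, one_mul]
    _ ≤ _ := mul_le_mul_of_nonneg_left h1 h2.le

theorem jap_ge_one {d : ℕ} (x : E d) : 1 ≤ jap x := by
  unfold jap; rw [Real.one_le_sqrt]; nlinarith [sq_nonneg ‖x‖]

theorem jap_ge_norm {d : ℕ} (x : E d) : ‖x‖ ≤ jap x := by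
  unfold jap; apply Real.le_sqrt_of_sq_le; linarith

theorem jap_le {d : ℕ} (x : E d) : jap x ≤ 1 + ‖x‖ := by
  unfold jap; rw [Real.sqrt_le_left (by positivity)]; nlinarith [norm_nonneg x]

theorem japr_pos (t : ℝ) : 0 < japr t := by
  unfold japr; positivity

theorem japr_le (t : ℝ) : japr t ≤ 1 + |t| := by
  unfold japr; rw [Real.sqrt_le_left (by positivity)]; nlinarith [abs_nonneg t, sq_abs t]

theorem coord_le {d : ℕ} (x : E d) (m : Fin d) : |x m| ≤ ‖x‖ := by
  simpa using PiLp.norm_apply_le x m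

theorem proj_le {d : ℕ} (m : Fin d) : ‖(EuclideanSpace.proj m : E d →L[ℝ] ℝ)‖ ≤ 1 := by
  refine ContinuousLinearMap.opNorm_le_bound _ zero_le_one fun x => ?_
  simpa using PiLp.norm_apply_le x m

theorem norm_gradient {d : ℕ} {f : E d → ℝ} {f' : E d →L[ℝ] ℝ} {x : E d}
    (h : HasFDerivAt f f' x) : ‖gradient f x‖ = ‖f'‖ := by
  unfold gradient
  rw [LinearIsometryEquiv.norm_map, h.fderiv]

theorem kk_xi {d : ℕ} (a : Fin d → Fin d → E d → ℝ) (x ξ : E d) (r M : ℝ)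
    (A : Fin d → Fin d → ℝ) (hA : ∀ m n, |a m n x| ≤ A m n) (hM : ‖ξ‖ ≤ M) :
    ‖gradient (fun ζ => kk a x ζ + r) ξ‖ ≤ (∑ m, ∑ n, A m n) * M := by
  have key : HasFDerivAt (fun ζ => kk a x ζ + r)
      ((1 / 2 : ℝ) • ∑ m : Fin d, ∑ n : Fin d,
        ((a m n x * ξ m) • (EuclideanSpace.proj n : E d →L[ℝ] ℝ) +
          (ξ n) • (a m n x • (EuclideanSpace.proj m : E d →L[ℝ] ℝ)))) ξ := by
    unfold kk
    refine HasFDerivAt.add_const _ (HasFDerivAt.const_mul ?_ _)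
    refine HasFDerivAt.fun_sum fun m _ => HasFDerivAt.fun_sum fun n _ => ?_
    refine HasFDerivAt.mul (HasFDerivAt.const_mul ?_ _) ?_
    · exact (EuclideanSpace.proj m : E d →L[ℝ] ℝ).hasFDerivAt
    · exact (EuclideanSpace.proj n : E d →L[ℝ] ℝ).hasFDerivAt
  rw [norm_gradient key, norm_smul]
  have hM0 : 0 ≤ M := (norm_nonneg _).trans hM
  have : ‖∑ m : Fin d, ∑ n : Fin d,
        ((a m n x * ξ m) • (EuclideanSpace.proj n : E d →L[ℝ] ℝ) +
          (ξ n) • (a m n x • (EuclideanSpace.proj m : E d →L[ℝ] ℝ)))‖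
      ≤ ∑ m, ∑ n, A m n * (2 * M) := by
    refine norm_sum_le_of_le _ fun m _ => norm_sum_le_of_le _ fun n _ => ?_
    have hA0 : 0 ≤ A m n := (abs_nonneg _).trans (hA m n)
    have e1 : ‖(a m n x * ξ m) • (EuclideanSpace.proj n : E d →L[ℝ] ℝ)‖ ≤ A m n * M * 1 := by
      rw [norm_smul, Real.norm_eq_abs, abs_mul]
      gcongr
      · exact hA m n
      · exact (coord_le ξ m).trans hM
      · exact proj_le n
    have e2 : ‖(ξ n) • (a m n x • (EuclideanSpace.proj m : E d →L[ℝ] ℝ))‖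
        ≤ M * (A m n * 1) := by
      rw [norm_smul, norm_smul, Real.norm_eq_abs, Real.norm_eq_abs]
      gcongr
      · exact (coord_le ξ n).trans hM
      · exact hA m n
      · exact proj_le m
    refine (norm_add_le _ _).trans ?_
    linarith
  simp only [← Finset.sum_mul] at this
  norm_num
  linarith

theorem kk_x {d : ℕ} (a : Fin d → Fin d → E d → ℝ) (W : E d → ℝ) (x ξ : E d) (M w : ℝ)
    (hd : ∀ m n, DifferentiableAt ℝ (a m n) x) (hW : DifferentiableAt ℝ W x)
    (A : Fin d → Fin d → ℝ) (hA : ∀ m n, ‖fderiv ℝ (a m n) x‖ ≤ A m n) (hM : ‖ξ‖ ≤ M)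
    (r : ℝ) (hr : 0 ≤ r) (hw : ‖fderiv ℝ W x‖ ≤ w) :
    ‖gradient (fun z => kk a z ξ + r * W z) x‖ ≤ (∑ m, ∑ n, A m n) * M ^ 2 + r * w := by
  have key : HasFDerivAt (fun z => kk a z ξ + r * W z)
      ((1 / 2 : ℝ) • (∑ m : Fin d, ∑ n : Fin d,
        (ξ n) • ((ξ m) • fderiv ℝ (a m n) x)) + r • fderiv ℝ W x) x := by
    unfold kk
    refine HasFDerivAt.add (HasFDerivAt.const_mul ?_ _) (hW.hasFDerivAt.const_mul _)
    refine HasFDerivAt.fun_sum fun m _ => HasFDerivAt.fun_sum fun n _ => ?_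
    exact ((hd m n).hasFDerivAt.mul_const _).mul_const _
  rw [norm_gradient key]
  have hM0 : 0 ≤ M := (norm_nonneg _).trans hM
  have h1 : ‖∑ m : Fin d, ∑ n : Fin d, (ξ n) • ((ξ m) • fderiv ℝ (a m n) x)‖
      ≤ ∑ m, ∑ n, A m n * M ^ 2 := by
    refine norm_sum_le_of_le _ fun m _ => norm_sum_le_of_le _ fun n _ => ?_
    have hA0 : 0 ≤ A m n := (norm_nonneg _).trans (hA m n)
    calc _ ≤ M * (M * A m n) := by
          rw [norm_smul, norm_smul, Real.norm_eq_abs, Real.norm_eq_abs]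
          gcongr
          · exact (coord_le ξ n).trans hM
          · exact (coord_le ξ m).trans hM
          · exact hA m n
      _ = _ := by ring
  simp only [← Finset.sum_mul] at h1
  refine (norm_add_le _ _).trans ?_
  rw [norm_smul, norm_smul, Real.norm_of_nonneg hr]
  have h0 := norm_nonneg (∑ m : Fin d, ∑ n : Fin d, (ξ n) • ((ξ m) • fderiv ℝ (a m n) x))
  have h2 : r * ‖fderiv ℝ W x‖ ≤ r * w := by gcongr
  have h3 : ‖(1 / 2 : ℝ)‖ = 1 / 2 := by norm_num
  rw [h3]
  linarith

/-- Uniform momentum-derivative estimate for the rescaled flow. -/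
theorem stmt11 (d : ℕ) (hd : 1 ≤ d) (μ ν : ℝ) (hμ : 1 / 2 < μ) (hμ1 : μ ≤ 1) (hν : 1 < ν)
    (a : Fin d → Fin d → E d → ℝ) (VL VS : E d → ℝ) (hAC : AssumptionC μ ν a VL VS)
    (T : ℝ) (hT : 0 < T)
    (X Ξ : ℝ → ℝ → E d) (x0 ξ0 : E d) (hξ0 : ξ0 ≠ 0)
    (hHam : ∀ l : ℝ, 1 ≤ l →
      IsHamiltonSol (fun z ζ => kk a z ζ + (1 / l ^ 2) * (VL z + VS z)) (X l) (Ξ l) ∧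
        X l 0 = x0 ∧ Ξ l 0 = ξ0)
    (lam0 c C M : ℝ) (hlam0 : 1 ≤ lam0) (hc : 0 < c) (hC : 0 < C) (hM : 0 < M)
    (hbd : ∀ l : ℝ, lam0 ≤ l → ∀ t : ℝ, |t| ≤ l * T →
      c * |t| - C ≤ ‖X l t‖ ∧ ‖Ξ l t‖ ≤ M) :
    ∃ C' > 0, ∀ l : ℝ, lam0 ≤ l → ∀ t : ℝ, |t| ≤ l * T →
      ‖deriv (Ξ l) t‖ ≤ C' * japr t ^ (-1 - μ) := by
  obtain ⟨ha, -, -, hda, hVL, hVS, hdVL, hdVS⟩ := hAC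
  choose A0 hA0 hA0' using fun m n => hda m n 0
  choose A1 hA1 hA1' using fun m n => hda m n 1
  obtain ⟨CL, hCL, hCL'⟩ := hdVL 1
  obtain ⟨CS, hCS, hCS'⟩ := hdVS 1
  have hbda : ∀ m n x, |a m n x| ≤ A0 m n + 1 := by
    intro m n x
    have h := hA0' m n x
    rw [norm_iteratedFDeriv_zero, Real.norm_eq_abs] at h
    have h1 : jap x ^ (-μ - ((0 : ℕ) : ℝ)) ≤ 1 :=
      Real.rpow_le_one_of_one_le_of_nonpos (jap_ge_one x) (by push_cast; linarith)
    have h2 : A0 m n * jap x ^ (-μ - ((0 : ℕ) : ℝ)) ≤ A0 m n * 1 :=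
      mul_le_mul_of_nonneg_left h1 (hA0 m n).le
    have h3 : |a m n x| ≤ |a m n x - if m = n then (1 : ℝ) else 0| + 1 := by
      have := abs_sub_abs_le_abs_sub (a m n x) (if m = n then (1 : ℝ) else 0)
      split_ifs at this ⊢ <;> simp at this ⊢ <;> linarith
    linarith
  have hfa : ∀ m n x, ‖fderiv ℝ (a m n) x‖ ≤ A1 m n * jap x ^ (-1 - μ) := by
    intro m n x
    have h := hA1' m n x
    rw [norm_iteratedFDeriv_one, fderiv_sub_const] at h
    convert h using 3
    push_cast; ring
  set S : ℝ := ∑ m, ∑ n, A1 m n with hS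
  have hS0 : 0 ≤ S := Finset.sum_nonneg fun m _ => Finset.sum_nonneg fun n _ => (hA1 m n).le
  set B : ℝ := (∑ m, ∑ n, (A0 m n + 1)) * M with hB
  have hB0 : 0 ≤ B := mul_nonneg (Finset.sum_nonneg fun m _ => Finset.sum_nonneg fun n _ => by
    linarith [hA0 m n]) hM.le
  set R : ℝ := 1 + ‖x0‖ + B * T with hR
  have hR0 : 0 < R := by positivity
  set K : ℝ := 1 + (1 + C) / c with hK
  have hK0 : 0 < K := by positivity
  have hCS2 : 0 < CL * R ^ (1 - μ) + CS := by positivity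
  refine ⟨S * K ^ (1 + μ) * M ^ 2 + (CL * R ^ (1 - μ) + CS) * (1 + T) ^ (1 + μ),
    by positivity, fun l hl t ht => ?_⟩
  have hl1 : 1 ≤ l := hlam0.trans hl
  have hl0 : 0 < l := by linarith
  obtain ⟨hsol, hX0, -⟩ := hHam l hl1
  obtain ⟨hlow, hup⟩ := hbd l hl t ht
  have hXup : ‖X l t‖ ≤ ‖x0‖ + B * (l * T) := by
    have h := (convex_Icc (-(l * T)) (l * T)).norm_image_sub_le_of_norm_hasDerivWithin_le
      (f := X l) (f' := fun s => gradient
        (fun ζ => kk a (X l s) ζ + (1 / l ^ 2) * (VL (X l s) + VS (X l s))) (Ξ l s)) (C := B)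
      (x := 0) (y := t) (fun s _ => (hsol s).1.hasDerivWithinAt)
      (fun s hs => kk_xi a (X l s) (Ξ l s) _ M _ (fun m n => hbda m n _)
        (hbd l hl s (abs_le.mpr hs)).2)
      ⟨by simp; positivity, by positivity⟩ (abs_le.mp ht)
    rw [hX0, sub_zero, Real.norm_eq_abs] at h
    have h2 : B * |t| ≤ B * (l * T) := by gcongr
    have h3 := norm_le_insert' (X l t) x0
    linarith
  have hjap0 : 0 < jap (X l t) := by linarith [jap_ge_one (X l t)]
  have hjup : jap (X l t) ≤ R * l := by
    have := jap_le (X l t)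
    have : 1 + ‖x0‖ ≤ (1 + ‖x0‖) * l := le_mul_of_one_le_right (by positivity) hl1
    rw [hR]; linarith
  have hjlow : japr t ≤ K * jap (X l t) := by
    have h1 := japr_le t
    have h2 := jap_ge_one (X l t)
    have h3 := jap_ge_norm (X l t)
    have h4 : |t| ≤ (1 + C) / c * jap (X l t) := by
      rw [div_mul_eq_mul_div, le_div_iff₀ hc]
      nlinarith
    rw [hK]; linarith
  have hjl : japr t ≤ (1 + T) * l := by
    have h1 := japr_le t
    linarith
  have hp1 := aux_pow (s := -1 - μ) hjap0 (japr_pos t) hK0 hjlow (by linarith)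
  have hp2 := aux_pow (s := -1 - μ) hl0 (japr_pos t) (by positivity : 0 < 1 + T) hjl (by linarith)
  rw [show -(-1 - μ) = 1 + μ by ring] at hp1 hp2
  have hWd : ‖fderiv ℝ (fun z => VL z + VS z) (X l t)‖
      ≤ CL * jap (X l t) ^ (1 - μ) + CS := by
    rw [fderiv_fun_add (hVL.differentiable (by simp) _) (hVS.differentiable (by simp) _)]
    refine (norm_add_le _ _).trans (add_le_add ?_ ?_)
    · have h := hCL' (X l t)
      rw [norm_iteratedFDeriv_one, show 2 - μ - ((1 : ℕ) : ℝ) = 1 - μ by push_cast; ring] at h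
      exact h
    · have h := hCS' (X l t)
      rw [norm_iteratedFDeriv_one] at h
      refine h.trans (mul_le_of_le_one_right hCS.le ?_)
      exact Real.rpow_le_one_of_one_le_of_nonpos (jap_ge_one _) (by push_cast; linarith)
  have hV2 : (1 / l ^ 2) * (CL * jap (X l t) ^ (1 - μ) + CS)
      ≤ (CL * R ^ (1 - μ) + CS) * l ^ (-1 - μ) := by
    have h1 : jap (X l t) ^ (1 - μ) ≤ R ^ (1 - μ) * l ^ (1 - μ) := by
      rw [← Real.mul_rpow hR0.le hl0.le]
      exact Real.rpow_le_rpow hjap0.le hjup (by linarith)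
    have h2 : 1 ≤ l ^ (1 - μ) := Real.one_le_rpow hl1 (by linarith)
    have h3 : (1 / l ^ 2) * l ^ (1 - μ) = l ^ (-1 - μ) := by
      rw [show -1 - μ = (1 - μ) - (2 : ℕ) by push_cast; ring, Real.rpow_sub_natCast hl0.ne']
      ring
    rw [← h3]
    calc (1 / l ^ 2) * (CL * jap (X l t) ^ (1 - μ) + CS)
        ≤ (1 / l ^ 2) * (CL * (R ^ (1 - μ) * l ^ (1 - μ)) + CS * l ^ (1 - μ)) := by
          gcongr
          exact le_mul_of_one_le_right hCS.le h2
      _ = _ := by ring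
  rw [(hsol t).2.deriv, norm_neg]
  have hmain := kk_x a (fun z => VL z + VS z) (X l t) (Ξ l t) M _
    (fun m n => (ha m n).differentiable (by simp) _)
    ((hVL.differentiable (by simp) _).add (hVS.differentiable (by simp) _)) _
    (fun m n => hfa m n _) hup (1 / l ^ 2) (by positivity) hWd
  simp only [← Finset.sum_mul] at hmain
  refine hmain.trans ?_
  calc S * jap (X l t) ^ (-1 - μ) * M ^ 2
        + (1 / l ^ 2) * (CL * jap (X l t) ^ (1 - μ) + CS)
      ≤ S * (K ^ (1 + μ) * japr t ^ (-1 - μ)) * M ^ 2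
        + (CL * R ^ (1 - μ) + CS) * ((1 + T) ^ (1 + μ) * japr t ^ (-1 - μ)) := by
        refine add_le_add ?_ (hV2.trans (mul_le_mul_of_nonneg_left hp2 hCS2.le))
        gcongr
    _ = _ := by ring
end
end

section
/- (Remainder estimate for potentials homogeneous of degree 1, from the proof of Theorem 4) Let V^{(L)} ∈ C^∞(ℝ^d;ℝ) satisfy V^{(L)}(x) = |x|·V^{(L)}(x/|x|) for all |x| ≥ 1. Fix t > 0 and define F(t,ξ) = ∫₀ᵗ V^{(L)}(sξ) ds − (t²/2)·V^{(L)}(ξ). Then for every multi-index α ∈ ℤ₊^d there is C_α > 0 such that |∂_ξ^α F(t,ξ)| ≤ C_α ⟨ξ⟩^{−1−|α|} for all ξ ∈ ℝ^d. -/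
open Filter MeasureTheory
open scoped Topology BigOperators

noncomputable section

theorem aux_hasFDeriv {X G : Type} [NormedAddCommGroup X] [NormedSpace ℝ X] [ProperSpace X]
    [NormedAddCommGroup G] [NormedSpace ℝ G] (f : ℝ × X → G)
    (hf : ContDiff ℝ (⊤ : ℕ∞) f) (t : ℝ) (x : X) :
    HasFDerivAt (fun x => ∫ s in (0 : ℝ)..t, f (s, x))
      (∫ s in (0 : ℝ)..t, (fderiv ℝ f (s, x)).comp (ContinuousLinearMap.inr ℝ ℝ X)) x := by
  have hc : Continuous f := hf.continuous
  have hd : Continuous (fderiv ℝ f) := hf.continuous_fderiv (by simp)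
  have hd' : Continuous (fun p : ℝ × X => (fderiv ℝ f p).comp (ContinuousLinearMap.inr ℝ ℝ X)) :=
    hd.clm_comp continuous_const
  obtain ⟨C, hC⟩ := ((isCompact_uIcc (a := (0 : ℝ)) (b := t)).prod
    (isCompact_closedBall x 1)).exists_bound_of_continuousOn hd'.continuousOn
  refine intervalIntegral.hasFDerivAt_integral_of_dominated_of_fderiv_le
    (F := fun x s => f (s, x))
    (F' := fun x s => (fderiv ℝ f (s, x)).comp (ContinuousLinearMap.inr ℝ ℝ X))
    (bound := fun _ => C) (Metric.closedBall_mem_nhds x one_pos) ?_ ?_ ?_ ?_ ?_ ?_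
  · exact Eventually.of_forall fun y => (by fun_prop : Continuous fun s => f (s, y)).aestronglyMeasurable
  · exact (by fun_prop : Continuous fun s => f (s, x)).intervalIntegrable _ _
  · exact (hd'.comp (by fun_prop : Continuous fun s : ℝ => (s, x))).aestronglyMeasurable
  · exact Eventually.of_forall fun s hs y hy => hC (s, y) ⟨Set.uIoc_subset_uIcc hs, hy⟩
  · simp
  · refine Eventually.of_forall fun s hs y hy => ?_
    have h1 : HasFDerivAt f (fderiv ℝ f (s, y)) (s, y) :=
      ((hf.differentiable (by simp)) (s, y)).hasFDerivAt
    exact h1.comp y (hasFDerivAt_prodMk_right s y)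

theorem aux_contDiff {X : Type} [NormedAddCommGroup X] [NormedSpace ℝ X] [ProperSpace X] (t : ℝ)
    (n : ℕ) : ∀ {G : Type} [NormedAddCommGroup G] [NormedSpace ℝ G] (f : ℝ × X → G)
    (_ : ContDiff ℝ (⊤ : ℕ∞) f), ContDiff ℝ n (fun x => ∫ s in (0 : ℝ)..t, f (s, x)) := by
  induction n with
  | zero =>
    intro G _ _ f hf
    rw [Nat.cast_zero, contDiff_zero]
    have hc := hf.continuous
    exact intervalIntegral.continuous_parametric_intervalIntegral_of_continuous'
      (by fun_prop) 0 t
  | succ n ih =>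
    intro G _ _ f hf
    rw [Nat.cast_succ, contDiff_succ_iff_hasFDerivAt]
    refine ⟨_, ih (fun p => (fderiv ℝ f p).comp (ContinuousLinearMap.inr ℝ ℝ X)) ?_,
      aux_hasFDeriv f hf t⟩
    exact (hf.fderiv_right (m := (⊤ : ℕ∞)) (by simp)).clm_comp contDiff_const

theorem aux_smul {d : ℕ} (VL : E d → ℝ)
    (hhom : ∀ x : E d, 1 ≤ ‖x‖ → VL x = ‖x‖ * VL (‖x‖⁻¹ • x))
    (x : E d) (hx : 1 ≤ ‖x‖) (u : ℝ) (hu0 : 0 < u) (hu : 1 ≤ u * ‖x‖) :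
    VL (u • x) = u * VL x := by
  have hn : ‖u • x‖ = u * ‖x‖ := by rw [norm_smul, Real.norm_of_nonneg hu0.le]
  rw [hhom (u • x) (hn ▸ hu), hn, hhom x hx, smul_smul]
  have : (u * ‖x‖)⁻¹ * u = ‖x‖⁻¹ := by
    field_simp
  rw [this, mul_assoc]

theorem aux_hom {d : ℕ} (VL : E d → ℝ) (hVL : ContDiff ℝ (⊤ : ℕ∞) VL)
    (hhom : ∀ x : E d, 1 ≤ ‖x‖ → VL x = ‖x‖ * VL (‖x‖⁻¹ • x))
    (t : ℝ) (ht : 0 < t) (x : E d) (hx : 1 ≤ ‖x‖) (hxt : 1 ≤ t * ‖x‖) (l : ℝ) (hl : 1 ≤ l) :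
    (∫ s in (0 : ℝ)..t, VL (s • l • x)) - t ^ 2 / 2 * VL (l • x) =
      l⁻¹ * ((∫ s in (0 : ℝ)..t, VL (s • x)) - t ^ 2 / 2 * VL x) := by
  have hl0 : 0 < l := by linarith
  have hc : Continuous fun s : ℝ => VL (s • x) := hVL.continuous.comp (by fun_prop)
  have h1 : (∫ s in (0 : ℝ)..t, VL (s • l • x)) = l⁻¹ * ∫ s in (0 : ℝ)..(t * l), VL (s • x) := by
    have := intervalIntegral.integral_comp_mul_right (a := 0) (b := t)
      (fun s : ℝ => VL (s • x)) hl0.ne'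
    simpa [smul_smul] using this
  have h2 : (∫ s in t..(t * l), VL (s • x)) = (t ^ 2 * l ^ 2 - t ^ 2) / 2 * VL x := by
    have : (∫ s in t..(t * l), VL (s • x)) = ∫ s in t..(t * l), s * VL x := by
      apply intervalIntegral.integral_congr
      intro s hs
      rw [Set.uIcc_of_le (by nlinarith)] at hs
      have := hs.1
      exact aux_smul VL hhom x hx s (by linarith) (by nlinarith [norm_nonneg x])
    rw [this, intervalIntegral.integral_mul_const, integral_id]
    ring
  have h3 := intervalIntegral.integral_add_adjacent_intervals
    (hc.intervalIntegrable (μ := volume) 0 t) (hc.intervalIntegrable t (t * l))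
  rw [h1, ← h3, h2, aux_smul VL hhom x hx l hl0 (by nlinarith)]
  field_simp
  ring

/-- Remainder estimate for potentials homogeneous of degree 1 (proof of Theorem 4). -/
theorem stmt17 (d : ℕ) (hd : 1 ≤ d)
    (VL : E d → ℝ) (hVL : ContDiff ℝ (⊤ : ℕ∞) VL)
    (hhom : ∀ x : E d, 1 ≤ ‖x‖ → VL x = ‖x‖ * VL (‖x‖⁻¹ • x))
    (t : ℝ) (ht : 0 < t) :
    ∀ n : ℕ, ∃ C > 0, ∀ ξ : E d,
      ‖iteratedFDeriv ℝ n
          (fun ξ' => (∫ s in (0 : ℝ)..t, VL (s • ξ')) - t ^ 2 / 2 * VL ξ') ξ‖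
        ≤ C * jap ξ ^ (-1 - (n : ℝ)) := by
  intro n
  set F : E d → ℝ := fun ξ' => (∫ s in (0 : ℝ)..t, VL (s • ξ')) - t ^ 2 / 2 * VL ξ' with hF
  have hFs : ContDiff ℝ n F := by
    refine ContDiff.sub ?_ ?_
    · exact aux_contDiff t n (fun p : ℝ × E d => VL (p.1 • p.2))
        (hVL.comp (contDiff_fst.smul contDiff_snd))
    · exact contDiff_const.mul (hVL.of_le (by exact_mod_cast le_top))
  have hDc : Continuous (iteratedFDeriv ℝ n F) := hFs.continuous_iteratedFDeriv le_rfl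
  set r : ℝ := 2 + t⁻¹ with hr
  have htinv : 0 < t⁻¹ := by positivity
  have hr2 : 2 ≤ r := by linarith
  obtain ⟨M, hM⟩ := (isCompact_closedBall (0 : E d) r).exists_bound_of_continuousOn
    hDc.continuousOn
  have hM0 : 0 ≤ M := (norm_nonneg _).trans
    (hM 0 (by simp only [Metric.mem_closedBall, dist_self]; linarith))
  refine ⟨(M + 1) * (2 * r) ^ (n + 1), by positivity, fun ξ => ?_⟩
  have hjpos : 0 < jap ξ := Real.sqrt_pos.2 (by positivity)
  have hj1 : jap ξ ≤ 1 + ‖ξ‖ := by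
    rw [jap]
    apply Real.sqrt_le_iff.2
    constructor
    · positivity
    · nlinarith [norm_nonneg ξ]
  have hexp : jap ξ ^ (-1 - (n : ℝ)) = (jap ξ ^ (n + 1))⁻¹ := by
    rw [← Real.rpow_natCast, ← Real.rpow_neg hjpos.le]
    congr 1
    push_cast
    ring
  rw [hexp, ← div_eq_mul_inv, le_div_iff₀ (by positivity)]
  by_cases hξ : ‖ξ‖ ≤ r
  · have h1 := hM ξ (by simpa using hξ)
    have h2 : jap ξ ^ (n + 1) ≤ (2 * r) ^ (n + 1) := by
      gcongr
      linarith
    calc _ ≤ M * (2 * r) ^ (n + 1) := by gcongr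
      _ ≤ _ := by gcongr; linarith
  · push Not at hξ
    set l : ℝ := ‖ξ‖ / r with hl
    have hr0 : 0 < r := by linarith
    have hl1 : 1 ≤ l := by rw [hl, le_div_iff₀ hr0]; linarith
    have hl0 : 0 < l := by linarith
    set η : E d := l⁻¹ • ξ with hη
    have hξη : l • η = ξ := by rw [hη, smul_inv_smul₀ hl0.ne']
    have hηn : ‖η‖ = r := by
      rw [hη, norm_smul, norm_inv, Real.norm_of_nonneg hl0.le, hl]
      have : 0 < ‖ξ‖ := by linarith
      field_simp
    have hev : (fun x => F (l • x)) =ᶠ[𝓝 η] l⁻¹ • F := by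
      have : ∀ᶠ x in 𝓝 η, 1 + t⁻¹ < ‖x‖ :=
        continuous_norm.continuousAt.eventually (lt_mem_nhds (by beta_reduce; rw [hηn]; linarith))
      filter_upwards [this] with x hx
      refine aux_hom VL hVL hhom t ht x (by linarith) ?_ l hl1
      have : t * t⁻¹ = 1 := mul_inv_cancel₀ ht.ne'
      nlinarith
    have h1 := (hev.iteratedFDeriv ℝ n).eq_of_nhds
    rw [iteratedFDeriv_const_smul_apply hFs.contDiffAt] at h1
    have h2 := congrFun (iteratedFDeriv_comp_const_smul l hFs) η
    rw [h1] at h2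
    simp only [hξη] at h2
    have h3 := congrArg norm h2
    rw [norm_smul, norm_smul, norm_inv, norm_pow, Real.norm_of_nonneg hl0.le] at h3
    have h4 := hM η (by simp [hηn])
    have h5 : ‖iteratedFDeriv ℝ n F ξ‖ * l ^ (n + 1) ≤ M := by
      have : ‖iteratedFDeriv ℝ n F ξ‖ * l ^ (n + 1) = ‖iteratedFDeriv ℝ n F η‖ := by
        rw [pow_succ, ← mul_assoc, mul_comm _ (l ^ n), ← h3]
        field_simp
      rw [this]; exact h4
    have h6 : jap ξ ≤ l * (2 * r) := by
      have : l * (2 * r) = 2 * ‖ξ‖ := by rw [hl]; field_simp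
      linarith
    calc _ ≤ ‖iteratedFDeriv ℝ n F ξ‖ * (l * (2 * r)) ^ (n + 1) := by gcongr
      _ = (‖iteratedFDeriv ℝ n F ξ‖ * l ^ (n + 1)) * (2 * r) ^ (n + 1) := by rw [mul_pow]; ring
      _ ≤ _ := by gcongr; linarith
end
end
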